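/- There exist universal constants δ > 0 and C₀ > 0 such that for every strictly increasing sequence (n_k)_{k≥1} of positive integers there exists a Lebesgue-measurable set Ω ⊆ [0,1] of Lebesgue measure at least δ such that, for every ω ∈ Ω, there are infinitely many indices k for which ∑_{m=1}^{n_k − 1} |S_m(ω)|² ≥ C₀·n_k². -/

import Mathlib

open MeasureTheory Real

/-- The quadratic Weyl sum `S_m(ω) = ∑_{j=1}^m exp(2πiω(j²-j))`. -/
noncomputable def S (ω : ℝ) (m : ℕ) : ℂ :=
  ∑ j ∈ Finset.Icc 1 m,
    Complex.exp (2 * (Real.pi : ℂ) * Complex.I * (ω : ℂ) * ((j : ℂ) ^ 2 - (j : ℂ)))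

/-!
Suppose `ω` is within `1 / q²` of a reduced fraction `a / q`. Multiplying the summands of the Weyl
sum by a unimodular factor varying by `O(1 / q)` per step turns each window of length `q` into a
complete quadratic Gauss sum, possibly with an extra linear phase `i / q`. One of the two Gauss sums
has modulus at least `√q`: the one without the extra phase vanishes when `4 ∣ q`, which is why the
phase is needed. Summation by parts then bounds `q` by the squares of the `S_m` with `m < 2q`, and
averaging over `q` windows gives `q² ≪ ∑_{m < 2q} |S_m(ω)|²`.

By Dirichlet's theorem every `ω ∈ [0, 1]` has such an approximation with `q ≤ n / 2`, and those with
`q ≤ n / 16` account for a set of measure at most `1 / 2`. So for each `n ≥ 2` the inequality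
`∑_{m < n} |S_m(ω)|² ≫ n²` holds on a set of measure at least `1 / 2`, and the limsup of these sets
along the given sequence again has measure at least `1 / 2`.
-/

open Filter Finset
open scoped FourierTransform

/-! ### Quadratic Gauss sums -/

section GaussSum

variable {R : Type*} [CommRing R] [Fintype R]

/-- The complete quadratic exponential sum `∑ₓ ψ(a x² + c x)` over a finite ring. -/
noncomputable def quadGaussSum (ψ : AddChar R ℂ) (a c : R) : ℂ :=
  ∑ x, ψ (a * x ^ 2 + c * x)

lemma conj_mul_quadGaussSum (ψ : AddChar R ℂ) (a c y : R) :
    (starRingEnd ℂ) (ψ (a * y ^ 2 + c * y)) * quadGaussSum ψ a c =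
      ∑ h, ψ (a * h ^ 2 + c * h) * ψ (y * (2 * a * h)) := by
  rw [quadGaussSum, ← AddChar.map_neg_eq_conj, mul_sum, ← Equiv.sum_comp (Equiv.addRight y)]
  refine sum_congr rfl fun h _ ↦ ?_
  rw [← AddChar.map_add_eq_mul, ← AddChar.map_add_eq_mul, Equiv.coe_addRight]
  ring_nf

lemma norm_sq_quadGaussSum [DecidableEq R] {ψ : AddChar R ℂ} (hψ : ψ.IsPrimitive) (a c : R) :
    (‖quadGaussSum ψ a c‖ ^ 2 : ℂ) =
      Fintype.card R * ∑ h with 2 * a * h = 0, ψ (a * h ^ 2 + c * h) := by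
  calc (‖quadGaussSum ψ a c‖ ^ 2 : ℂ)
      = ∑ y, (starRingEnd ℂ) (ψ (a * y ^ 2 + c * y)) * quadGaussSum ψ a c := by
        rw [← Complex.conj_mul', ← sum_mul, ← map_sum, quadGaussSum]
    _ = ∑ h, ψ (a * h ^ 2 + c * h) * ∑ y, ψ (y * (2 * a * h)) := by
        simp only [conj_mul_quadGaussSum, mul_sum]
        exact sum_comm
    _ = Fintype.card R * ∑ h with 2 * a * h = 0, ψ (a * h ^ 2 + c * h) := by
        simp only [AddChar.sum_mulShift _ hψ, mul_comm (Fintype.card R : ℂ), sum_mul, sum_filter,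
          Nat.cast_ite, Nat.cast_zero, mul_ite, ite_mul, mul_zero, zero_mul]

end GaussSum

section ZMod

variable {q : ℕ} [NeZero q]

lemma stdAddChar_eq_neg_one {h : ZMod q} (hh : h ≠ 0) (h2 : 2 * h = 0) :
    ZMod.stdAddChar h = -1 := by
  have hsq : ZMod.stdAddChar h * ZMod.stdAddChar h = 1 := by
    rw [← AddChar.map_add_eq_mul, ← two_mul, h2, AddChar.map_zero_eq_one]
  refine (mul_self_eq_one_iff.1 hsq).resolve_left fun h1 ↦ hh ?_
  exact ZMod.injective_stdAddChar (h1.trans (AddChar.map_zero_eq_one _).symm)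

-- Only `h = 0` and `h = q / 2` contribute to the two squared norms, and the contributions of
-- `q / 2` have opposite signs.
lemma norm_sq_quadGaussSum_add_norm_sq {a : ZMod q} (ha : IsUnit a) (c : ZMod q) :
    ‖quadGaussSum ZMod.stdAddChar a c‖ ^ 2 + ‖quadGaussSum ZMod.stdAddChar a (c + 1)‖ ^ 2 =
      2 * (q : ℝ) := by
  suffices h : ∑ h : ZMod q with 2 * a * h = 0,
      (ZMod.stdAddChar (a * h ^ 2 + c * h) + ZMod.stdAddChar (a * h ^ 2 + (c + 1) * h)) = 2 by
    have := ZMod.isPrimitive_stdAddChar q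
    rw [← Complex.ofReal_inj]
    push_cast
    rw [norm_sq_quadGaussSum this, norm_sq_quadGaussSum this, ← mul_add, ← sum_add_distrib, h,
      ZMod.card, mul_comm]
  rw [sum_eq_single_of_mem 0 (by simp)]
  · simp only [ne_eq, OfNat.ofNat_ne_zero, not_false_eq_true, zero_pow, mul_zero, add_zero,
      AddChar.map_zero_eq_one, one_add_one_eq_two]
  · intro h hmem hh
    have h2 : 2 * h = 0 := ha.mul_right_eq_zero.1 (by linear_combination (mem_filter.1 hmem).2)
    rw [show a * h ^ 2 + (c + 1) * h = (a * h ^ 2 + c * h) + h by ring,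
      AddChar.map_add_eq_mul _ _ h, stdAddChar_eq_neg_one hh h2, mul_neg_one, add_neg_cancel]

lemma exists_le_norm_sq_quadGaussSum {a : ZMod q} (ha : IsUnit a) (c : ZMod q) :
    ∃ b : ℕ, b ≤ 1 ∧ (q : ℝ) ≤ ‖quadGaussSum ZMod.stdAddChar a (c + b)‖ ^ 2 := by
  by_contra! hlt
  have h0 := hlt 0 zero_le_one
  have h1 := hlt 1 le_rfl
  rw [Nat.cast_zero, add_zero] at h0
  rw [Nat.cast_one] at h1
  linarith [norm_sq_quadGaussSum_add_norm_sq ha c]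

lemma sum_Ico_natCast_zmod {M : Type*} [AddCommMonoid M] (F : ZMod q → M) (m : ℕ) :
    ∑ i ∈ Ico m (m + q), F i = ∑ x, F x := by
  refine sum_bij' (fun i _ ↦ (i : ZMod q)) (fun x _ ↦ m + (x - (m : ZMod q)).val) (by simp)
    (fun x _ ↦ ?_) (fun i hi ↦ ?_) (by simp) (by simp)
  · simpa using ZMod.val_lt (x - (m : ZMod q))
  · obtain ⟨hmi, hiq⟩ := mem_Ico.1 hi
    rw [← Nat.cast_sub hmi, ZMod.val_cast_of_lt (by lia), Nat.add_sub_cancel' hmi]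

lemma sum_Ico_fourierChar_quadratic (a c : ℤ) (m : ℕ) :
    ∑ i ∈ Ico m (m + q), (𝐞 ((a * (i : ℝ) ^ 2 + c * i) / q) : ℂ) =
      quadGaussSum (R := ZMod q) ZMod.stdAddChar a c := by
  rw [quadGaussSum, ← sum_Ico_natCast_zmod _ m]
  refine sum_congr rfl fun i _ ↦ ?_
  have hcast : (a : ZMod q) * (i : ZMod q) ^ 2 + c * i =
      ((a * (i : ℤ) ^ 2 + c * i : ℤ) : ZMod q) := by
    push_cast
    rfl
  rw [hcast, ZMod.stdAddChar_coe, Real.fourierChar_apply]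
  push_cast
  ring_nf

end ZMod

/-! ### Mean squares of partial sums -/

section PartialSums

variable {R : Type*} [SeminormedRing R] {f u : ℕ → R}

lemma norm_sum_Ico_mul_le {m n : ℕ} {ε : ℝ} (hmn : m < n) (hu : ∀ i, ‖u i‖ ≤ 1)
    (hε : ∀ i ∈ Ico m (n - 1), ‖u (i + 1) - u i‖ ≤ ε) :
    ‖∑ i ∈ Ico m n, u i * f i‖ ≤ ‖∑ i ∈ range n, f i‖ + ‖∑ i ∈ range m, f i‖ +
      ε * ∑ k ∈ Ico m (n - 1), ‖∑ i ∈ range (k + 1), f i‖ := by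
  have hparts := sum_Ico_by_parts u f hmn
  simp only [smul_eq_mul] at hparts
  rw [hparts, mul_sum (Ico m (n - 1))]
  refine (norm_sub_le _ _).trans (add_le_add ((norm_sub_le _ _).trans (add_le_add ?_ ?_)) ?_)
  · exact (norm_mul_le _ _).trans (mul_le_of_le_one_left (norm_nonneg _) (hu _))
  · exact (norm_mul_le _ _).trans (mul_le_of_le_one_left (norm_nonneg _) (hu _))
  · refine (norm_sum_le _ _).trans (sum_le_sum fun i hi ↦ (norm_mul_le _ _).trans ?_)
    exact mul_le_mul_of_nonneg_right (hε i hi) (norm_nonneg _)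

lemma sq_sum_le_mul_sum_range_sq (g : ℕ → ℝ) {m q : ℕ} (hm : m < q) :
    (∑ k ∈ Ico m (m + q - 1), g (k + 1)) ^ 2 ≤ q * ∑ k ∈ range (2 * q), g k ^ 2 := by
  rw [sum_Ico_add' g m (m + q - 1) 1]
  refine sq_sum_le_card_mul_sum_sq.trans ?_
  gcongr
  · rw [Nat.card_Ico]
    lia
  · intro k hk
    rw [mem_Ico] at hk
    exact mem_range.2 (by lia)

lemma norm_sq_sum_Ico_mul_le {m q : ℕ} {c : ℝ} (hm : m < q) (hu : ∀ i, ‖u i‖ ≤ 1)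
    (hc : ∀ i < 2 * q, ‖u (i + 1) - u i‖ ≤ c / q) :
    ‖∑ i ∈ Ico m (m + q), u i * f i‖ ^ 2 ≤
      3 * (‖∑ i ∈ range (m + q), f i‖ ^ 2 + ‖∑ i ∈ range m, f i‖ ^ 2 +
        c ^ 2 / q * ∑ k ∈ range (2 * q), ‖∑ i ∈ range k, f i‖ ^ 2) := by
  have hq : (0 : ℝ) < q := by exact_mod_cast (Nat.zero_le m).trans_lt hm
  set x := ‖∑ i ∈ range (m + q), f i‖
  set y := ‖∑ i ∈ range m, f i‖
  set z := ∑ k ∈ Ico m (m + q - 1), ‖∑ i ∈ range (k + 1), f i‖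
  set A := ∑ k ∈ range (2 * q), ‖∑ i ∈ range k, f i‖ ^ 2
  have hnorm : ‖∑ i ∈ Ico m (m + q), u i * f i‖ ≤ x + y + c / q * z :=
    norm_sum_Ico_mul_le (by lia) hu fun i hi ↦ hc i (by rw [mem_Ico] at hi; lia)
  have hz : (c / q * z) ^ 2 ≤ c ^ 2 / q * A := by
    calc (c / q * z) ^ 2 = (c / q) ^ 2 * z ^ 2 := mul_pow _ _ _
      _ ≤ (c / q) ^ 2 * (q * A) := by
        gcongr
        exact sq_sum_le_mul_sum_range_sq (fun k ↦ ‖∑ i ∈ range k, f i‖) hm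
      _ = c ^ 2 / q * A := by field_simp
  calc ‖∑ i ∈ Ico m (m + q), u i * f i‖ ^ 2 ≤ (x + y + c / q * z) ^ 2 := by gcongr
    _ ≤ 3 * (x ^ 2 + y ^ 2 + (c / q * z) ^ 2) := by
      linarith [sq_nonneg (x - y), sq_nonneg (y - c / q * z), sq_nonneg (x - c / q * z)]
    _ ≤ 3 * (x ^ 2 + y ^ 2 + c ^ 2 / q * A) := by gcongr

lemma mul_le_mul_sum_norm_sq_of_window {q : ℕ} {c W : ℝ} (hu : ∀ i, ‖u i‖ ≤ 1)
    (hc : ∀ i < 2 * q, ‖u (i + 1) - u i‖ ≤ c / q)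
    (hW : ∀ m < q, W ≤ ‖∑ i ∈ Ico m (m + q), u i * f i‖ ^ 2) :
    q * W ≤ 3 * (1 + c ^ 2) * ∑ k ∈ range (2 * q), ‖∑ i ∈ range k, f i‖ ^ 2 := by
  rcases q.eq_zero_or_pos with rfl | hq
  · simp
  set F : ℕ → ℝ := fun k ↦ ‖∑ i ∈ range k, f i‖ ^ 2
  calc q * W = ∑ _m ∈ range q, W := by rw [sum_const, card_range, nsmul_eq_mul]
    _ ≤ ∑ m ∈ range q, 3 * (F (m + q) + F m + c ^ 2 / q * ∑ k ∈ range (2 * q), F k) :=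
      sum_le_sum fun m hm ↦ (hW m (mem_range.1 hm)).trans
        (norm_sq_sum_Ico_mul_le (mem_range.1 hm) hu hc)
    _ = 3 * (∑ k ∈ range (2 * q), F k + c ^ 2 * ∑ k ∈ range (2 * q), F k) := by
      rw [← mul_sum, sum_add_distrib, sum_add_distrib, sum_const, card_range, nsmul_eq_mul]
      rw [two_mul, sum_range_add]
      simp only [add_comm q]
      field_simp
      ring
    _ = 3 * (1 + c ^ 2) * ∑ k ∈ range (2 * q), F k := by ring

end PartialSums

/-! ### Weyl sums near a rational -/

lemma norm_fourierChar_sub_le (x y : ℝ) : ‖(𝐞 x : ℂ) - 𝐞 y‖ ≤ 2 * π * |x - y| := by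
  have hfactor : (𝐞 x : ℂ) - 𝐞 y = 𝐞 y * (Complex.exp (Complex.I * (2 * π * (x - y) : ℝ)) - 1) := by
    rw [mul_comm Complex.I, ← Real.fourierChar_apply, mul_sub_one, ← Circle.coe_mul,
      ← AddChar.map_add_eq_mul, add_sub_cancel]
  calc ‖(𝐞 x : ℂ) - 𝐞 y‖ ≤ ‖2 * π * (x - y)‖ := by
        rw [hfactor, norm_mul, Circle.norm_coe, one_mul]
        exact norm_exp_I_mul_ofReal_sub_one_le
    _ = 2 * π * |x - y| := by
        rw [norm_mul, Real.norm_of_nonneg (by positivity), Real.norm_eq_abs]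

lemma S_eq_sum_range (ω : ℝ) (m : ℕ) :
    S ω m = ∑ i ∈ range m, (𝐞 (ω * ((i : ℝ) ^ 2 + i)) : ℂ) := by
  rw [S, ← Ico_add_one_right_eq_Icc, ← sum_Ico_add' _ 0 m 1, ← range_eq_Ico]
  refine sum_congr rfl fun i _ ↦ ?_
  rw [Real.fourierChar_apply]
  push_cast
  ring_nf

lemma sum_Icc_norm_sq_S (ω : ℝ) (n : ℕ) :
    ∑ m ∈ Icc 1 (n - 1), ‖S ω m‖ ^ 2 = ∑ m ∈ range n, ‖S ω m‖ ^ 2 := by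
  refine sum_subset (fun m hm ↦ ?_) fun m hm hm' ↦ ?_
  · rw [mem_Icc] at hm
    exact mem_range.2 (by lia)
  · obtain rfl : m = 0 := by
      rw [mem_range] at hm
      rw [mem_Icc] at hm'
      lia
    simp [S]

/-- The factor that, up to the linear phase `b i / q`, carries the summand `𝐞 (ω (i² + i))` of the
Weyl sum at `ω` to the one at the nearby rational `a / q`. -/
noncomputable def rationalTwist (ω : ℝ) (a : ℤ) (q b i : ℕ) : ℂ :=
  𝐞 (b * i / q - (ω - a / q) * ((i : ℝ) ^ 2 + i))

lemma rationalTwist_mul (ω : ℝ) (a : ℤ) (q b i : ℕ) :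
    rationalTwist ω a q b i * 𝐞 (ω * ((i : ℝ) ^ 2 + i)) =
      𝐞 ((a * (i : ℝ) ^ 2 + (a + b : ℤ) * i) / q) := by
  rw [rationalTwist, ← Circle.coe_mul, ← AddChar.map_add_eq_mul]
  push_cast
  ring_nf

lemma norm_rationalTwist_succ_sub_le {ω κ : ℝ} {a : ℤ} {q b i : ℕ} (hb : b ≤ 1) (hi : i < 2 * q)
    (hω : |ω - a / q| ≤ κ / q ^ 2) :
    ‖rationalTwist ω a q b (i + 1) - rationalTwist ω a q b i‖ ≤ 2 * π * (1 + 4 * κ) / q := by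
  have hq : (0 : ℝ) < q := by exact_mod_cast (by lia : 0 < q)
  have hi' : (i : ℝ) + 1 ≤ 2 * q := by exact_mod_cast hi
  have hphase : b * ((i + 1 : ℕ) : ℝ) / q - (ω - a / q) * (((i + 1 : ℕ) : ℝ) ^ 2 + (i + 1 : ℕ)) -
      (b * i / q - (ω - a / q) * ((i : ℝ) ^ 2 + i)) = b / q - (ω - a / q) * (2 * (i + 1)) := by
    push_cast
    ring
  refine (norm_fourierChar_sub_le _ _).trans ?_
  rw [hphase, mul_div_assoc (2 * π)]
  gcongr
  calc |b / q - (ω - a / q) * (2 * ((i : ℝ) + 1))|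
      ≤ |(b : ℝ) / q| + |(ω - a / q) * (2 * ((i : ℝ) + 1))| := abs_sub _ _
    _ = b / q + |ω - a / q| * (2 * ((i : ℝ) + 1)) := by
      rw [abs_mul, abs_of_nonneg (by positivity : (0 : ℝ) ≤ b / q),
        abs_of_nonneg (by positivity : (0 : ℝ) ≤ 2 * ((i : ℝ) + 1))]
    _ ≤ 1 / q + κ / q ^ 2 * (2 * (2 * q)) := by
      gcongr
      · exact_mod_cast hb
      · exact (abs_nonneg _).trans hω
    _ = (1 + 4 * κ) / q := by field_simp; ring

theorem sq_den_le_mul_sum_norm_sq_S {ω κ : ℝ} {r : ℚ} (hr : |ω - r| ≤ κ / r.den ^ 2) :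
    (r.den : ℝ) ^ 2 ≤
      3 * (1 + (2 * π * (1 + 4 * κ)) ^ 2) * ∑ m ∈ range (2 * r.den), ‖S ω m‖ ^ 2 := by
  rw [Rat.cast_def] at hr
  have hunit : IsUnit (r.num : ZMod r.den) :=
    (ZMod.coe_int_isUnit_iff_isCoprime _ _).2 r.isCoprime_num_den.symm
  have : NeZero r.den := ⟨r.den_nz⟩
  obtain ⟨b, hb, hgauss⟩ := exists_le_norm_sq_quadGaussSum hunit r.num
  simp only [S_eq_sum_range]
  rw [sq]
  refine mul_le_mul_sum_norm_sq_of_window (u := rationalTwist ω r.num r.den b)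
    (fun _ ↦ (Circle.norm_coe _).le) (fun i hi ↦ norm_rationalTwist_succ_sub_le hb hi hr)
    fun m _ ↦ ?_
  simp only [rationalTwist_mul, sum_Ico_fourierChar_quadratic]
  exact_mod_cast hgauss

/-! ### Reals with no approximation of small denominator -/

/-- The points of `[0, 1]` within `ρ / r.den` of some rational `r` of denominator at most `Q`. -/
def nearRationals (Q : ℕ) (ρ : ℝ) : Set ℝ :=
  {ω ∈ Set.Icc 0 1 | ∃ r : ℚ, r.den ≤ Q ∧ |ω - r| ≤ ρ / r.den}

lemma num_mem_Icc_of_abs_sub_lt {ω : ℝ} (hω : ω ∈ Set.Icc 0 1) {r : ℚ}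
    (hr : |ω - r| < 1 / r.den) : r.num ∈ Set.Icc 0 (r.den : ℤ) := by
  have hden : (0 : ℝ) < r.den := by exact_mod_cast r.pos
  rw [Rat.cast_def, abs_lt] at hr
  have hlower : ((-1 : ℤ) : ℝ) < r.num := by
    have : -1 / (r.den : ℝ) < r.num / r.den := by rw [neg_div]; linarith [hω.1]
    simpa using (div_lt_div_iff_of_pos_right hden).1 this
  have hupper : (r.num : ℝ) < ((r.den + 1 : ℤ) : ℝ) := by
    have : (r.num : ℝ) / r.den < (r.den + 1) / r.den := by
      rw [add_div, div_self hden.ne']; linarith [hω.2]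
    simpa using (div_lt_div_iff_of_pos_right hden).1 this
  rw [Int.cast_lt] at hlower hupper
  exact ⟨by lia, by lia⟩

lemma nearRationals_subset_biUnion_closedBall (Q : ℕ) {ρ : ℝ} (hρ : ρ < 1) :
    nearRationals Q ρ ⊆
      ⋃ q ∈ Icc 1 Q, ⋃ a ∈ range (q + 1), Metric.closedBall ((a : ℝ) / q) (ρ / q) := by
  rintro ω ⟨hω, r, hrQ, hr⟩
  have hden : (0 : ℝ) < r.den := by exact_mod_cast r.pos
  obtain ⟨hnum, hnum'⟩ := num_mem_Icc_of_abs_sub_lt hω (hr.trans_lt (by gcongr))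
  obtain ⟨a, ha⟩ := Int.eq_ofNat_of_zero_le hnum
  rw [Rat.cast_def, ha, Int.cast_natCast] at hr
  simp only [Set.mem_iUnion]
  exact ⟨r.den, mem_Icc.2 ⟨r.pos, hrQ⟩, a, mem_range.2 (by lia), hr⟩

lemma volume_nearRationals_le (Q : ℕ) {ρ : ℝ} (hρ₀ : 0 ≤ ρ) (hρ₁ : ρ < 1) :
    volume (nearRationals Q ρ) ≤ ENNReal.ofReal (4 * Q * ρ) := by
  have hfixed : ∀ q ∈ Icc 1 Q, volume (⋃ a ∈ range (q + 1),
      Metric.closedBall ((a : ℝ) / q) (ρ / q)) ≤ ENNReal.ofReal (4 * ρ) := fun q hq ↦ by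
    have hq : (1 : ℝ) ≤ q := by exact_mod_cast (mem_Icc.1 hq).1
    refine (measure_biUnion_finset_le _ _).trans ?_
    simp only [Real.volume_closedBall, sum_const, card_range]
    rw [← ENNReal.ofReal_nsmul, nsmul_eq_mul]
    refine ENNReal.ofReal_le_ofReal ?_
    calc ((q + 1 : ℕ) : ℝ) * (2 * (ρ / q)) ≤ (2 * q) * (2 * (ρ / q)) := by
          gcongr
          push_cast
          linarith
      _ = 4 * ρ := by field_simp; ring
  calc volume (nearRationals Q ρ)
      ≤ ∑ q ∈ Icc 1 Q, volume (⋃ a ∈ range (q + 1), Metric.closedBall ((a : ℝ) / q) (ρ / q)) :=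
        (measure_mono (nearRationals_subset_biUnion_closedBall Q hρ₁)).trans
          (measure_biUnion_finset_le _ _)
    _ ≤ ∑ q ∈ Icc 1 Q, ENNReal.ofReal (4 * ρ) := sum_le_sum hfixed
    _ = ENNReal.ofReal (4 * Q * ρ) := by
        rw [sum_const, Nat.card_Icc, Nat.add_sub_cancel, ← ENNReal.ofReal_nsmul, nsmul_eq_mul]
        ring_nf

/-! ### Large mean squares -/

/-- The points of `[0, 1]` where the Weyl sums of length below `n` have square sum at least
`n² / 10⁶`; the constant comes out of `sq_den_le_mul_sum_norm_sq_S` at `κ = 1`. -/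
def largeWeylSet (n : ℕ) : Set ℝ :=
  Set.Icc 0 1 ∩ {ω | 1 / 10 ^ 6 * (n : ℝ) ^ 2 ≤ ∑ m ∈ Icc 1 (n - 1), ‖S ω m‖ ^ 2}

lemma measurableSet_largeWeylSet (n : ℕ) : MeasurableSet (largeWeylSet n) := by
  refine measurableSet_Icc.inter (measurableSet_le measurable_const ?_)
  refine (continuous_finsetSum _ fun m _ ↦ ?_).measurable
  unfold S
  fun_prop

lemma mem_largeWeylSet_of_abs_sub_le {n : ℕ} {ω : ℝ} (hω : ω ∈ Set.Icc 0 1) {r : ℚ}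
    (hr : |ω - r| ≤ 1 / r.den ^ 2) (hrn : 2 * r.den ≤ n) (hnr : n ≤ 16 * r.den) :
    ω ∈ largeWeylSet n := by
  have hconst : 3 * (1 + (2 * π * (1 + 4 * 1)) ^ 2) ≤ 3003 := by nlinarith [pi_lt_d2, pi_pos]
  have hden : (r.den : ℝ) ^ 2 ≤ 3003 * ∑ m ∈ range n, ‖S ω m‖ ^ 2 :=
    (sq_den_le_mul_sum_norm_sq_S hr).trans (by gcongr)
  have hn : (n : ℝ) ^ 2 ≤ (16 * r.den) ^ 2 := by
    gcongr
    exact_mod_cast hnr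
  refine ⟨hω, ?_⟩
  rw [Set.mem_ofPred_eq, sum_Icc_norm_sq_S]
  linarith [sq_nonneg (r.den : ℝ)]

lemma Icc_subset_largeWeylSet_union {n : ℕ} (hn : 2 ≤ n) :
    Set.Icc 0 1 ⊆ largeWeylSet n ∪ nearRationals (n / 2 / 8) (1 / ((n / 2 : ℕ) + 1)) := by
  intro ω hω
  obtain ⟨r, hr, hrn⟩ := Real.exists_rat_abs_sub_le_and_den_le ω (by lia : 0 < n / 2)
  rcases le_or_gt r.den (n / 2 / 8) with hsmall | hlarge
  · exact Or.inr ⟨hω, r, hsmall, by rwa [div_div]⟩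
  · refine Or.inl (mem_largeWeylSet_of_abs_sub_le hω (hr.trans ?_) (by lia) (by lia))
    rw [sq]
    gcongr
    exact_mod_cast hrn.trans (Nat.le_succ _)

theorem half_le_volume_largeWeylSet {n : ℕ} (hn : 2 ≤ n) :
    ENNReal.ofReal (1 / 2) ≤ volume (largeWeylSet n) := by
  set N := n / 2
  have hN : (1 : ℝ) ≤ N := by exact_mod_cast (by lia : 1 ≤ N)
  have hN8 : ((N / 8 : ℕ) : ℝ) ≤ N / 8 := by exact_mod_cast Nat.cast_div_le
  have hnear : volume (nearRationals (N / 8) (1 / (N + 1))) ≤ ENNReal.ofReal (1 / 2) := by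
    refine (volume_nearRationals_le _ (by positivity) ?_).trans (ENNReal.ofReal_le_ofReal ?_)
    · rw [div_lt_one (by positivity)]
      linarith
    · rw [mul_one_div, div_le_div_iff₀ (by positivity) two_pos]
      linarith
  refine (ENNReal.add_le_add_iff_right (ENNReal.ofReal_ne_top (r := 1 / 2))).1 ?_
  calc ENNReal.ofReal (1 / 2) + ENNReal.ofReal (1 / 2) = volume (Set.Icc (0 : ℝ) 1) := by
        rw [← ENNReal.ofReal_add (by norm_num) (by norm_num), add_halves, Real.volume_Icc, sub_zero]
    _ ≤ volume (largeWeylSet n) + volume (nearRationals (N / 8) (1 / (N + 1))) :=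
        (measure_mono (Icc_subset_largeWeylSet_union hn)).trans (measure_union_le _ _)
    _ ≤ volume (largeWeylSet n) + ENNReal.ofReal (1 / 2) := by gcongr

lemma le_measure_limsup_of_frequently_le {α : Type*} [MeasurableSpace α] {μ : Measure α}
    {s : ℕ → Set α} (hs : ∀ k, MeasurableSet (s k)) (hfin : μ (⋃ k, s k) ≠ ⊤) {c : ENNReal}
    (hc : ∃ᶠ k in atTop, c ≤ μ (s k)) : c ≤ μ (limsup s atTop) := by
  have hanti : Antitone fun K ↦ ⋃ k ≥ K, s k := fun K L hKL ↦
    Set.biUnion_subset_biUnion_left fun k hk ↦ hKL.trans hk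
  rw [limsup_eq_iInf_iSup_of_nat]
  simp only [Set.iSup_eq_iUnion, Set.iInf_eq_iInter]
  rw [hanti.measure_iInter
    (fun K ↦ (MeasurableSet.biUnion (Set.to_countable _) fun k _ ↦ hs k).nullMeasurableSet)
    ⟨0, by simpa using hfin⟩]
  refine le_iInf fun K ↦ ?_
  obtain ⟨k, hKk, hck⟩ := frequently_atTop.1 hc K
  exact hck.trans (measure_mono (Set.subset_biUnion_of_mem (u := s) hKk))

theorem stmt_8_general :
    ∃ δ > (0 : ℝ), ∃ C₀ > (0 : ℝ),
      ∀ nseq : ℕ → ℕ, (∃ᶠ k in atTop, 2 ≤ nseq k) →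
        ∃ Ω : Set ℝ, Ω ⊆ Set.Icc 0 1 ∧ MeasurableSet Ω ∧
          ENNReal.ofReal δ ≤ volume Ω ∧
          ∀ ω ∈ Ω,
            {k : ℕ | C₀ * (nseq k : ℝ) ^ 2 ≤
              ∑ m ∈ Finset.Icc 1 (nseq k - 1), ‖S ω m‖ ^ 2}.Infinite := by
  refine ⟨1 / 2, by norm_num, 1 / 10 ^ 6, by norm_num, fun nseq hnseq ↦ ?_⟩
  have hmeas : ∀ k, MeasurableSet (largeWeylSet (nseq k)) := fun _ ↦ measurableSet_largeWeylSet _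
  have hsub : ⋃ k, largeWeylSet (nseq k) ⊆ Set.Icc 0 1 := Set.iUnion_subset fun _ _ hω ↦ hω.1
  refine ⟨limsup (fun k ↦ largeWeylSet (nseq k)) atTop, fun ω hω ↦ ?_,
    .measurableSet_limsup hmeas, ?_, fun ω hω ↦ ?_⟩
  · obtain ⟨k, hk⟩ := (mem_limsup_iff_frequently_mem.1 hω).exists
    exact hk.1
  · exact le_measure_limsup_of_frequently_le hmeas
      (measure_ne_top_of_subset hsub measure_Icc_lt_top.ne)
      (hnseq.mono fun _ ↦ half_le_volume_largeWeylSet)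
  · exact Nat.frequently_atTop_iff_infinite.1
      ((mem_limsup_iff_frequently_mem.1 hω).mono fun _ hk ↦ hk.2)

/-- There are universal constants `δ, C₀ > 0` such that for every strictly increasing
sequence `(n_k)` of positive integers there is a set `Ω ⊆ [0,1]` of Lebesgue measure at
least `δ` with: for every `ω ∈ Ω` there are infinitely many `k` with
`∑_{m=1}^{n_k - 1} |S_m(ω)|² ≥ C₀ n_k²`. -/
theorem stmt_8 :
    ∃ δ > (0 : ℝ), ∃ C₀ > (0 : ℝ),
      ∀ nseq : ℕ → ℕ, StrictMono nseq → (∀ k, 1 ≤ nseq k) →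
        ∃ Ω : Set ℝ, Ω ⊆ Set.Icc 0 1 ∧ MeasurableSet Ω ∧
          ENNReal.ofReal δ ≤ volume Ω ∧
          ∀ ω ∈ Ω,
            {k : ℕ | C₀ * (nseq k : ℝ) ^ 2 ≤
              ∑ m ∈ Finset.Icc 1 (nseq k - 1), ‖S ω m‖ ^ 2}.Infinite := by
  obtain ⟨δ, hδ, C₀, hC₀, h⟩ := stmt_8_general
  exact ⟨δ, hδ, C₀, hC₀, fun nseq hmono _ ↦
    h nseq (hmono.tendsto_atTop.eventually_ge_atTop 2).frequently⟩
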